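/- Let n ≥ 1, ε ∈ (0,1], τ ∈ [0,1), and let G = (V,E) be a finite simple graph with c(G) ≤ |E|²·(1−τ)²ε²/(16·√n). Let P be a probability vector on [n] with ∑_i |P i − 1/n| ≥ ε that additionally satisfies |E|·(μ(P) − μ(P)²) < c(G)·(γ(P) − μ(P)²), and let T = |E|·(1+τε²)/n. Then the probability that the collision count Z satisfies Z < T is at most 1/4. -/

import Mathlib

open Finset

open Classical in
/-- Probability of the event `A` under the product distribution on `Ω = V → Fin n`,
where the coordinates are independent and each has law the probability vector `P`. -/
noncomputable def pr {V : Type*} [Fintype V] [DecidableEq V] {n : ℕ}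
    (P : Fin n → ℝ) (A : (V → Fin n) → Prop) : ℝ :=
  ∑ ω : V → Fin n, if A ω then ∏ v, P (ω v) else 0

/-- Expectation of `f` under the product distribution. -/
noncomputable def ex {V : Type*} [Fintype V] [DecidableEq V] {n : ℕ}
    (P : Fin n → ℝ) (f : (V → Fin n) → ℝ) : ℝ :=
  ∑ ω : V → Fin n, (∏ v, P (ω v)) * f ω

/-- Variance of `f` under the product distribution. -/
noncomputable def var {V : Type*} [Fintype V] [DecidableEq V] {n : ℕ}
    (P : Fin n → ℝ) (f : (V → Fin n) → ℝ) : ℝ :=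
  ex P (fun ω => (f ω - ex P f) ^ 2)

/-- The collision count `Z(ω) = ∑_{{u,v} ∈ E} 1[ω u = ω v]`. -/
noncomputable def collisions {V : Type*} [Fintype V] [DecidableEq V] {n : ℕ}
    (G : SimpleGraph V) [DecidableRel G.Adj] (ω : V → Fin n) : ℝ :=
  ∑ e ∈ G.edgeFinset,
    Sym2.lift ⟨fun u v => if ω u = ω v then (1 : ℝ) else 0,
      fun u v => by by_cases h : ω u = ω v <;> simp [h, eq_comm]⟩ e

/-- The number of edges `|E|` of the comparison graph. -/
def edgeCount {V : Type*} [Fintype V] [DecidableEq V]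
    (G : SimpleGraph V) [DecidableRel G.Adj] : ℕ :=
  G.edgeFinset.card

/-- The number of ordered 2-paths `c(G) = ∑_v d(v)·(d(v) − 1)`. -/
def twoPaths {V : Type*} [Fintype V]
    (G : SimpleGraph V) [DecidableRel G.Adj] : ℕ :=
  ∑ v, G.degree v * (G.degree v - 1)

/-!
Write `μ = ∑ i, P i ^ 2` and `γ = ∑ i, P i ^ 3`. The Hoeffding decomposition splits the centred
count `Z - |E| μ` into a linear part `∑ v, d(v) (P (ω v) - μ)` and a sum over the edges of a
kernel whose mean vanishes as soon as one endpoint is averaged out. All these terms are pairwise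
orthogonal, which gives `Var Z = |E| (μ - μ²) + c(G) (γ - μ²)`; for the distributions at hand the
second term dominates. With `s = μ - 1 / n = ∑ i, (P i - 1 / n) ^ 2` one has
`γ - μ² ≤ s ^ (3 / 2) + s / n - s²`, and `ε`-farness means `s ≥ ε² / n`, so that
`ε² (γ - μ²) ≤ 2 √n s²`. The hypothesis on `c(G)` then bounds `Var Z` by `(|E| (1 - τ) s)² / 4`,
while the threshold lies at least `|E| (1 - τ) s` below the mean, and Chebyshev's inequality
concludes.
-/

section Expectation

variable {V : Type*} [Fintype V] [DecidableEq V] {n : ℕ} {P : Fin n → ℝ}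

lemma ex_add (P : Fin n → ℝ) (f g : (V → Fin n) → ℝ) :
    ex P (fun ω => f ω + g ω) = ex P f + ex P g := by
  simp only [ex, mul_add, sum_add_distrib]

lemma ex_const_mul (P : Fin n → ℝ) (c : ℝ) (f : (V → Fin n) → ℝ) :
    ex P (fun ω => c * f ω) = c * ex P f := by
  simp only [ex, mul_left_comm _ c, mul_sum]

lemma ex_sum {ι : Type*} (P : Fin n → ℝ) (s : Finset ι) (f : ι → (V → Fin n) → ℝ) :
    ex P (fun ω => ∑ j ∈ s, f j ω) = ∑ j ∈ s, ex P (f j) := by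
  simp only [ex, mul_sum]
  exact sum_comm

lemma ex_const (hP1 : ∑ i, P i = 1) (c : ℝ) : ex P (fun _ : V → Fin n => c) = c := by
  have htotal : ∑ ω : V → Fin n, ∏ v, P (ω v) = 1 := by
    simpa [hP1] using (Fintype.prod_sum (fun (_ : V) i => P i)).symm
  rw [ex, ← sum_mul, htotal, one_mul]

lemma var_eq_ex_sq_sub (hP1 : ∑ i, P i = 1) (f : (V → Fin n) → ℝ) :
    var P f = ex P (fun ω => f ω ^ 2) - ex P f ^ 2 := by
  have hexpand (ω : V → Fin n) :
      (f ω - ex P f) ^ 2 = f ω ^ 2 + (-2 * ex P f * f ω + ex P f ^ 2) := by ring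
  simp only [var, hexpand, ex_add, ex_const_mul, ex_const hP1]
  ring

lemma ex_add_sq_of_orthogonal {f g : (V → Fin n) → ℝ} (hfg : ex P (fun ω => f ω * g ω) = 0) :
    ex P (fun ω => (f ω + g ω) ^ 2) = ex P (fun ω => f ω ^ 2) + ex P (fun ω => g ω ^ 2) := by
  have hexpand (ω : V → Fin n) : (f ω + g ω) ^ 2 = f ω ^ 2 + (g ω ^ 2 + 2 * (f ω * g ω)) := by
    ring
  simp only [hexpand, ex_add, ex_const_mul, hfg, mul_zero, add_zero]

lemma ex_sum_sq_of_orthogonal {ι : Type*} (s : Finset ι) {f : ι → (V → Fin n) → ℝ}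
    (hf : (s : Set ι).Pairwise fun i j => ex P (fun ω => f i ω * f j ω) = 0) :
    ex P (fun ω => (∑ i ∈ s, f i ω) ^ 2) = ∑ i ∈ s, ex P (fun ω => f i ω ^ 2) := by
  classical
  induction s using Finset.induction_on with
  | empty => simp [ex]
  | insert a s ha ih =>
    rw [coe_insert] at hf
    have horth : ex P (fun ω => f a ω * ∑ i ∈ s, f i ω) = 0 := by
      simp only [mul_sum, ex_sum]
      exact sum_eq_zero fun i hi => hf (Set.mem_insert _ _) (Set.mem_insert_of_mem _ hi)
        (ne_of_mem_of_not_mem hi ha).symm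
    simp only [sum_insert ha, ex_add_sq_of_orthogonal horth,
      ih (hf.mono (Set.subset_insert _ _))]

lemma pr_lt_mul_sq_le_var (hP0 : ∀ i, 0 ≤ P i) {f : (V → Fin n) → ℝ} {t : ℝ}
    (ht : t ≤ ex P f) : pr P (fun ω => f ω < t) * (ex P f - t) ^ 2 ≤ var P f := by
  have hsq {ω : V → Fin n} (hω : f ω < t) : (ex P f - t) ^ 2 ≤ (f ω - ex P f) ^ 2 := by
    nlinarith
  rw [pr, sum_mul]
  refine sum_le_sum fun ω _ => ?_
  have hweight : 0 ≤ ∏ v, P (ω v) := prod_nonneg fun v _ => hP0 _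
  split_ifs with hω
  · exact mul_le_mul_of_nonneg_left (hsq hω) hweight
  · rw [zero_mul]
    positivity

end Expectation

section ConditionalExpectation

variable {V : Type*} [DecidableEq V] {n : ℕ} {P : Fin n → ℝ}

/-- The conditional expectation of `f` given all coordinates except `v`, obtained by resampling
the coordinate `v` from `P`. -/
noncomputable def condEx (P : Fin n → ℝ) (v : V) (f : (V → Fin n) → ℝ) (ω : V → Fin n) : ℝ :=
  ∑ i, P i * f (Function.update ω v i)

lemma condEx_mul_of_dependsOn {v : V} (f : (V → Fin n) → ℝ) {g : (V → Fin n) → ℝ}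
    (hg : DependsOn g {v}ᶜ) (ω : V → Fin n) :
    condEx P v (fun ω => f ω * g ω) ω = condEx P v f ω * g ω := by
  have hupdate (i : Fin n) : g (Function.update ω v i) = g ω :=
    hg fun w hw => Function.update_of_ne hw i ω
  simp only [condEx, hupdate, sum_mul, mul_assoc]

variable [Fintype V]

lemma prod_update_mul (ω : V → Fin n) (v : V) (i : Fin n) :
    (∏ w, P (Function.update ω v i w)) * P (ω v) = (∏ w, P (ω w)) * P i := by
  have hrest : ∏ w ∈ univ.erase v, P (Function.update ω v i w) = ∏ w ∈ univ.erase v, P (ω w) :=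
    prod_congr rfl fun w hw => by rw [Function.update_of_ne (ne_of_mem_erase hw)]
  rw [← mul_prod_erase univ (fun w => P (Function.update ω v i w)) (mem_univ v),
    ← mul_prod_erase univ (fun w => P (ω w)) (mem_univ v), hrest, Function.update_self]
  ring

lemma ex_condEx (hP1 : ∑ i, P i = 1) (v : V) (f : (V → Fin n) → ℝ) :
    ex P (condEx P v f) = ex P f := by
  -- Exchanging `ω v` with an independent sample preserves the product weight.
  have hswap : Function.Involutive
      (fun p : (V → Fin n) × Fin n => (Function.update p.1 v p.2, p.1 v)) := by
    rintro ⟨ω, i⟩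
    simp
  have hsum := Equiv.sum_comp hswap.toPerm (fun p => (∏ w, P (p.1 w)) * P p.2 * f p.1)
  simp only [Function.Involutive.coe_toPerm, prod_update_mul, Fintype.sum_prod_type] at hsum
  calc ex P (condEx P v f)
      = ∑ ω : V → Fin n, ∑ i, (∏ w, P (ω w)) * P i * f (Function.update ω v i) := by
        simp only [ex, condEx, mul_sum, mul_assoc]
    _ = ∑ ω : V → Fin n, ∑ i, (∏ w, P (ω w)) * P i * f ω := hsum
    _ = ex P f := by simp only [ex, ← sum_mul, ← mul_sum, hP1, mul_one]

lemma ex_mul_eq_zero_of_condEx_eq_zero (hP1 : ∑ i, P i = 1) {v : V} {f g : (V → Fin n) → ℝ}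
    (hf : ∀ ω, condEx P v f ω = 0) (hg : DependsOn g {v}ᶜ) :
    ex P (fun ω => f ω * g ω) = 0 := by
  rw [← ex_condEx hP1 v, ← ex_const (V := V) hP1 0]
  congr with ω
  rw [condEx_mul_of_dependsOn f hg, hf, zero_mul]

lemma ex_apply (hP1 : ∑ i, P i = 1) (v : V) (f : Fin n → ℝ) :
    ex P (fun ω : V → Fin n => f (ω v)) = ∑ i, P i * f i := by
  rw [← ex_condEx hP1 v, ← ex_const (V := V) hP1 (∑ i, P i * f i)]
  congr with ω
  simp only [condEx, Function.update_self]

lemma ex_apply_mul_apply_eq_zero (hP1 : ∑ i, P i = 1) {f : Fin n → ℝ}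
    (hf : ∑ i, P i * f i = 0) (g : Fin n → ℝ) {u v : V} (huv : u ≠ v) :
    ex P (fun ω : V → Fin n => f (ω u) * g (ω v)) = 0 :=
  ex_mul_eq_zero_of_condEx_eq_zero hP1 (v := u)
    (fun ω => by simpa only [condEx, Function.update_self] using hf)
    (fun _ _ h => congrArg g (h v huv.symm))

lemma ex_sum_mul_apply_sq (hP1 : ∑ i, P i = 1) (a : V → ℝ) {f : Fin n → ℝ}
    (hf : ∑ i, P i * f i = 0) :
    ex P (fun ω : V → Fin n => (∑ v, a v * f (ω v)) ^ 2)
      = (∑ v, a v ^ 2) * ∑ i, P i * f i ^ 2 := by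
  rw [ex_sum_sq_of_orthogonal, sum_mul]
  · simp only [mul_pow, ex_const_mul, ex_apply hP1 _ (fun i => f i ^ 2)]
  · intro u _ v _ huv
    simp only [mul_mul_mul_comm _ (f _), ex_const_mul, mul_zero,
      ex_apply_mul_apply_eq_zero hP1 hf f huv]

end ConditionalExpectation

section Kernel

variable {n : ℕ}

/-- The mean of the symmetric kernel `K` at `(i, X)`, where `X` has law `P`. Symmetric functions
of two points are encoded as functions on unordered pairs. -/
noncomputable def kernelCondMean (P : Fin n → ℝ) (K : Sym2 (Fin n) → ℝ) (i : Fin n) : ℝ :=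
  ∑ j, P j * K s(i, j)

/-- The mean of the symmetric kernel `K` at two independent points with law `P`. -/
noncomputable def kernelMean (P : Fin n → ℝ) (K : Sym2 (Fin n) → ℝ) : ℝ :=
  ∑ i, P i * kernelCondMean P K i

/-- The first-order term of the Hoeffding decomposition
`K s(i, j) = kernelMean P K + (linearPart P K i + linearPart P K j) + degeneratePart P K s(i, j)`
of the kernel `K`. -/
noncomputable def linearPart (P : Fin n → ℝ) (K : Sym2 (Fin n) → ℝ) (i : Fin n) : ℝ :=
  kernelCondMean P K i - kernelMean P K

/-- The second-order term of the Hoeffding decomposition of the kernel `K`. -/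
noncomputable def degeneratePart (P : Fin n → ℝ) (K : Sym2 (Fin n) → ℝ) (z : Sym2 (Fin n)) : ℝ :=
  K z - (z.map (linearPart P K)).add - kernelMean P K

variable {P : Fin n → ℝ}

lemma sum_mul_linearPart (hP1 : ∑ i, P i = 1) (K : Sym2 (Fin n) → ℝ) :
    ∑ i, P i * linearPart P K i = 0 := by
  simp only [linearPart, mul_sub, sum_sub_distrib, ← sum_mul, hP1, one_mul]
  exact sub_self _

lemma sum_mul_linearPart_sq (hP1 : ∑ i, P i = 1) (K : Sym2 (Fin n) → ℝ) :
    ∑ i, P i * linearPart P K i ^ 2 = ∑ i, P i * kernelCondMean P K i ^ 2 - kernelMean P K ^ 2 := by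
  have hexpand (i : Fin n) : P i * linearPart P K i ^ 2 = P i * kernelCondMean P K i ^ 2
      - 2 * kernelMean P K * (P i * kernelCondMean P K i) + P i * kernelMean P K ^ 2 := by
    rw [linearPart]
    ring
  simp only [hexpand, sum_add_distrib, sum_sub_distrib, ← mul_sum, ← sum_mul, hP1]
  rw [← kernelMean]
  ring

lemma kernelCondMean_degeneratePart (hP1 : ∑ i, P i = 1) (K : Sym2 (Fin n) → ℝ) (i : Fin n) :
    kernelCondMean P (degeneratePart P K) i = 0 := by
  simp only [kernelCondMean, degeneratePart, Sym2.map_mk, Sym2.add_mk, mul_sub, mul_add,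
    sum_sub_distrib, sum_add_distrib, ← sum_mul, hP1, sum_mul_linearPart hP1]
  rw [← kernelCondMean, linearPart]
  ring

variable {V : Type*}

lemma dependsOn_comp_map (K : Sym2 (Fin n) → ℝ) (e : Sym2 V) :
    DependsOn (fun ω : V → Fin n => K (e.map ω)) {v | v ∈ e} :=
  fun _ _ h => congrArg K (Sym2.map_congr h)

variable [DecidableEq V]

lemma condEx_kernel (K : Sym2 (Fin n) → ℝ) {u v : V} (huv : u ≠ v) (ω : V → Fin n) :
    condEx P v (fun ω => K (s(u, v).map ω)) ω = kernelCondMean P K (ω u) := by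
  simp only [condEx, kernelCondMean, Sym2.map_mk, Function.update_self,
    Function.update_of_ne huv]

variable [Fintype V]

lemma ex_kernel (hP1 : ∑ i, P i = 1) (K : Sym2 (Fin n) → ℝ) {e : Sym2 V} (he : ¬e.IsDiag) :
    ex P (fun ω => K (e.map ω)) = kernelMean P K := by
  induction e with | _ u v =>
  rw [← ex_condEx hP1 v, kernelMean, ← ex_apply hP1 u]
  congr with ω
  exact condEx_kernel K he ω

lemma ex_kernel_mul_eq_zero_of_dependsOn (hP1 : ∑ i, P i = 1) {K : Sym2 (Fin n) → ℝ}
    (hK : ∀ i, kernelCondMean P K i = 0) {e : Sym2 V} (he : ¬e.IsDiag) {v : V} (hv : v ∈ e)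
    {g : (V → Fin n) → ℝ} (hg : DependsOn g {v}ᶜ) :
    ex P (fun ω => K (e.map ω) * g ω) = 0 := by
  obtain ⟨u, rfl⟩ := hv
  rw [Sym2.eq_swap] at he ⊢
  exact ex_mul_eq_zero_of_condEx_eq_zero hP1
    (fun ω => (condEx_kernel K he ω).trans (hK _)) hg

lemma ex_kernel_mul_apply_eq_zero (hP1 : ∑ i, P i = 1) {K : Sym2 (Fin n) → ℝ}
    (hK : ∀ i, kernelCondMean P K i = 0) {e : Sym2 V} (he : ¬e.IsDiag) (f : Fin n → ℝ) (w : V) :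
    ex P (fun ω => K (e.map ω) * f (ω w)) = 0 := by
  obtain ⟨v, hve, hvw⟩ : ∃ v ∈ e, v ≠ w := by
    induction e with | _ u v =>
    by_cases hu : u = w
    · exact ⟨v, Sym2.mem_mk_right u v, fun hv => he (hu.trans hv.symm)⟩
    · exact ⟨u, Sym2.mem_mk_left u v, hu⟩
  exact ex_kernel_mul_eq_zero_of_dependsOn hP1 hK he hve fun _ _ h => congrArg f (h w hvw.symm)

lemma ex_kernel_mul_kernel_eq_zero (hP1 : ∑ i, P i = 1) {K : Sym2 (Fin n) → ℝ}
    (hK : ∀ i, kernelCondMean P K i = 0) {e e' : Sym2 V} (he : ¬e.IsDiag) (hne : e ≠ e') :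
    ex P (fun ω => K (e.map ω) * K (e'.map ω)) = 0 := by
  obtain ⟨v, hve, hve'⟩ : ∃ v ∈ e, v ∉ e' := by
    contrapose! hne
    induction e with | _ u v =>
    exact ((Sym2.mem_and_mem_iff he).mp
      ⟨hne u (Sym2.mem_mk_left u v), hne v (Sym2.mem_mk_right u v)⟩).symm
  refine ex_kernel_mul_eq_zero_of_dependsOn hP1 hK he hve ((dependsOn_comp_map K e').mono ?_)
  rintro w hw rfl
  exact hve' hw

lemma ex_degeneratePart_sq (hP1 : ∑ i, P i = 1) (K : Sym2 (Fin n) → ℝ) {e : Sym2 V}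
    (he : ¬e.IsDiag) :
    ex P (fun ω => degeneratePart P K (e.map ω) ^ 2)
      = kernelMean P (K ^ 2) - kernelMean P K ^ 2 - 2 * ∑ i, P i * linearPart P K i ^ 2 := by
  have hmean := ex_kernel hP1 K he
  have hsq := ex_kernel hP1 (K ^ 2) he
  have hdeg := kernelCondMean_degeneratePart hP1 K
  have hlin := sum_mul_linearPart hP1 K
  have hR (w : V) := ex_kernel_mul_apply_eq_zero hP1 hdeg he (linearPart P K) w
  have hvar := var_eq_ex_sq_sub hP1 (fun ω : V → Fin n => K (e.map ω))
  induction e with | _ u v =>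
  have hsplit (ω : V → Fin n) : K (s(u, v).map ω) - kernelMean P K = degeneratePart P K
      (s(u, v).map ω) + (linearPart P K (ω u) + linearPart P K (ω v)) := by
    simp only [degeneratePart, Sym2.map_mk, Sym2.add_mk]
    ring
  have horth : ex P (fun ω : V → Fin n => degeneratePart P K (s(u, v).map ω)
      * (linearPart P K (ω u) + linearPart P K (ω v))) = 0 := by
    simp only [mul_add, ex_add, hR, add_zero]
  simp only [var, hmean, hsplit, ex_add_sq_of_orthogonal horth,
    ex_add_sq_of_orthogonal (ex_apply_mul_apply_eq_zero hP1 hlin (linearPart P K) he),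
    ex_apply hP1 _ (fun i => linearPart P K i ^ 2)] at hvar
  simp only [Pi.pow_apply] at hsq
  linarith

end Kernel

section GraphStatistic

variable {V : Type*} [Fintype V] (G : SimpleGraph V) [DecidableRel G.Adj]

lemma sum_edgeFinset_add_map (f : V → ℝ) :
    ∑ e ∈ G.edgeFinset, (e.map f).add = ∑ v, G.degree v * f v := by
  classical
  have hadd : ∀ e ∈ G.edgeFinset, (e.map f).add = ∑ v ∈ e.toFinset, f v := by
    intro e he
    induction e with | _ u v =>
    rw [Sym2.toFinset_mk_eq, sum_pair (G.not_isDiag_of_mem_edgeFinset he)]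
    rfl
  rw [sum_congr rfl hadd, sum_comm' (t' := univ) (s' := fun v => G.incidenceFinset v)
    (by simp [SimpleGraph.incidenceSet, Sym2.mem_toFinset])]
  simp only [sum_const, G.card_incidenceFinset_eq_degree, nsmul_eq_mul]

variable [DecidableEq V]

lemma sum_degree_sq : ∑ v, (G.degree v : ℝ) ^ 2 = twoPaths G + 2 * edgeCount G := by
  have hsq (d : ℕ) : d ^ 2 = d * (d - 1) + d := by cases d <;> grind
  have hnat : ∑ v, G.degree v ^ 2 = twoPaths G + 2 * edgeCount G := by
    simp only [hsq, sum_add_distrib, G.sum_degrees_eq_twice_card_edges, twoPaths, edgeCount]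
  exact_mod_cast hnat

variable {n : ℕ} {P : Fin n → ℝ}

/-- The graph-indexed U-statistic of the symmetric kernel `K`: the sum of `K` over the samples
at the two ends of each edge. -/
noncomputable def edgeStatistic (K : Sym2 (Fin n) → ℝ) (ω : V → Fin n) : ℝ :=
  ∑ e ∈ G.edgeFinset, K (e.map ω)

lemma ex_edgeStatistic (hP1 : ∑ i, P i = 1) (K : Sym2 (Fin n) → ℝ) :
    ex P (edgeStatistic G K) = edgeCount G * kernelMean P K := by
  unfold edgeStatistic
  rw [ex_sum, sum_congr rfl fun e he => ex_kernel hP1 K (G.not_isDiag_of_mem_edgeFinset he),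
    sum_const, nsmul_eq_mul, edgeCount]

lemma edgeStatistic_sub_eq (P : Fin n → ℝ) (K : Sym2 (Fin n) → ℝ) (ω : V → Fin n) :
    edgeStatistic G K ω - edgeCount G * kernelMean P K
      = ∑ e ∈ G.edgeFinset, degeneratePart P K (e.map ω)
        + ∑ v, G.degree v * linearPart P K (ω v) := by
  rw [← sum_edgeFinset_add_map G fun v => linearPart P K (ω v)]
  simp only [degeneratePart, Sym2.map_map, sum_sub_distrib, sum_const, nsmul_eq_mul,
    edgeStatistic, edgeCount, Function.comp_def]
  ring

lemma var_edgeStatistic (hP1 : ∑ i, P i = 1) (K : Sym2 (Fin n) → ℝ) :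
    var P (edgeStatistic G K)
      = edgeCount G * (kernelMean P (K ^ 2) - kernelMean P K ^ 2)
        + twoPaths G * (∑ i, P i * kernelCondMean P K i ^ 2 - kernelMean P K ^ 2) := by
  have hdeg := kernelCondMean_degeneratePart hP1 K
  have hdiag : ∀ e ∈ G.edgeFinset, ¬e.IsDiag := fun e => G.not_isDiag_of_mem_edgeFinset
  have hdegenerate : ex P (fun ω : V → Fin n =>
        (∑ e ∈ G.edgeFinset, degeneratePart P K (e.map ω)) ^ 2)
      = edgeCount G * (kernelMean P (K ^ 2) - kernelMean P K ^ 2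
        - 2 * ∑ i, P i * linearPart P K i ^ 2) := by
    rw [ex_sum_sq_of_orthogonal _ fun e he e' _ hne =>
        ex_kernel_mul_kernel_eq_zero hP1 hdeg (hdiag e he) hne,
      sum_congr rfl fun e he => ex_degeneratePart_sq hP1 K (hdiag e he),
      sum_const, nsmul_eq_mul, edgeCount]
  have horth : ex P (fun ω : V → Fin n => (∑ e ∈ G.edgeFinset, degeneratePart P K (e.map ω))
      * ∑ v, G.degree v * linearPart P K (ω v)) = 0 := by
    simp only [sum_mul_sum, mul_left_comm _ (G.degree _ : ℝ), ex_sum, ex_const_mul]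
    exact sum_eq_zero fun e he => sum_eq_zero fun v _ => by
      rw [ex_kernel_mul_apply_eq_zero hP1 hdeg (hdiag e he), mul_zero]
  simp only [var, ex_edgeStatistic G hP1, edgeStatistic_sub_eq]
  rw [ex_add_sq_of_orthogonal horth, hdegenerate,
    ex_sum_mul_apply_sq hP1 _ (sum_mul_linearPart hP1 K), sum_degree_sq,
    sum_mul_linearPart_sq hP1]
  ring

end GraphStatistic

section Collisions

variable {n : ℕ}

/-- The kernel whose edge statistic is the collision count. -/
def collisionKernel (z : Sym2 (Fin n)) : ℝ :=
  if z.IsDiag then 1 else 0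

lemma kernelCondMean_collisionKernel (P : Fin n → ℝ) (i : Fin n) :
    kernelCondMean P collisionKernel i = P i := by
  simp [kernelCondMean, collisionKernel]

lemma kernelMean_collisionKernel (P : Fin n → ℝ) :
    kernelMean P collisionKernel = ∑ i, P i ^ 2 := by
  simp only [kernelMean, kernelCondMean_collisionKernel, sq]

lemma collisionKernel_sq : (collisionKernel : Sym2 (Fin n) → ℝ) ^ 2 = collisionKernel := by
  ext z
  simp [collisionKernel]

variable {V : Type*} [Fintype V] [DecidableEq V] {P : Fin n → ℝ}
  (G : SimpleGraph V) [DecidableRel G.Adj]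

lemma collisions_eq_edgeStatistic :
    (collisions G : (V → Fin n) → ℝ) = edgeStatistic G collisionKernel := by
  ext ω
  refine sum_congr rfl fun e _ => ?_
  induction e with | _ u v =>
  simp [collisionKernel]

lemma ex_collisions (hP1 : ∑ i, P i = 1) :
    ex P (collisions G) = edgeCount G * ∑ i, P i ^ 2 := by
  rw [collisions_eq_edgeStatistic, ex_edgeStatistic G hP1, kernelMean_collisionKernel]

lemma var_collisions (hP1 : ∑ i, P i = 1) :
    var P (collisions G) = edgeCount G * (∑ i, P i ^ 2 - (∑ i, P i ^ 2) ^ 2)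
      + twoPaths G * (∑ i, P i ^ 3 - (∑ i, P i ^ 2) ^ 2) := by
  simp only [collisions_eq_edgeStatistic, var_edgeStatistic G hP1, collisionKernel_sq,
    kernelMean_collisionKernel, kernelCondMean_collisionKernel, ← pow_succ']

end Collisions

section Moments

variable {ι : Type*}

lemma sum_cube_le_sqrt_sum_sq_cube (s : Finset ι) (x : ι → ℝ) :
    ∑ i ∈ s, x i ^ 3 ≤ √(∑ i ∈ s, x i ^ 2) ^ 3 := by
  have hnonneg : 0 ≤ ∑ i ∈ s, x i ^ 2 := sum_nonneg fun i _ => sq_nonneg _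
  have hle (i : ι) (hi : i ∈ s) : x i ≤ √(∑ i ∈ s, x i ^ 2) :=
    Real.le_sqrt_of_sq_le (single_le_sum (f := fun i => x i ^ 2) (fun i _ => sq_nonneg _) hi)
  calc ∑ i ∈ s, x i ^ 3 = ∑ i ∈ s, x i * x i ^ 2 := by simp only [← pow_succ']
    _ ≤ ∑ i ∈ s, √(∑ i ∈ s, x i ^ 2) * x i ^ 2 := sum_le_sum fun i hi =>
        mul_le_mul_of_nonneg_right (hle i hi) (sq_nonneg _)
    _ = √(∑ i ∈ s, x i ^ 2) ^ 3 := by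
        rw [← mul_sum, pow_succ', Real.sq_sqrt hnonneg]

variable [Fintype ι] {P : ι → ℝ}

lemma card_pos_of_sum_eq_one (hP1 : ∑ i, P i = 1) : 0 < Fintype.card ι := by
  refine Fintype.card_pos_iff.mpr (not_isEmpty_iff.mp fun _ => ?_)
  simp at hP1

lemma sum_sub_inv_card_sq (hP1 : ∑ i, P i = 1) :
    ∑ i, (P i - 1 / Fintype.card ι) ^ 2 = ∑ i, P i ^ 2 - 1 / Fintype.card ι := by
  have hcard : (Fintype.card ι : ℝ) ≠ 0 := by exact_mod_cast (card_pos_of_sum_eq_one hP1).ne'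
  simp only [sub_sq, sum_add_distrib, sum_sub_distrib, ← sum_mul, ← mul_sum, hP1, sum_const,
    card_univ, nsmul_eq_mul]
  field_simp
  ring

lemma inv_card_le_sum_sq (hP1 : ∑ i, P i = 1) : 1 / (Fintype.card ι : ℝ) ≤ ∑ i, P i ^ 2 := by
  rw [← sub_nonneg, ← sum_sub_inv_card_sq hP1]
  positivity

lemma sum_sub_inv_card_cube (hP1 : ∑ i, P i = 1) :
    ∑ i, (P i - 1 / Fintype.card ι) ^ 3
      = ∑ i, P i ^ 3 - 3 / Fintype.card ι * ∑ i, P i ^ 2 + 2 / (Fintype.card ι : ℝ) ^ 2 := by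
  have hcard : (Fintype.card ι : ℝ) ≠ 0 := by exact_mod_cast (card_pos_of_sum_eq_one hP1).ne'
  have hexpand (i : ι) : (P i - 1 / Fintype.card ι) ^ 3 = P i ^ 3 - 3 / Fintype.card ι * P i ^ 2
      + 3 / (Fintype.card ι : ℝ) ^ 2 * P i - (1 / Fintype.card ι) ^ 3 := by ring
  simp only [hexpand, sum_add_distrib, sum_sub_distrib, ← mul_sum, hP1, sum_const, card_univ,
    nsmul_eq_mul]
  field_simp
  ring

lemma sum_cube_sub_sum_sq_sq_le (hP1 : ∑ i, P i = 1) {s : ℝ}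
    (hs : s = ∑ i, P i ^ 2 - 1 / Fintype.card ι) :
    ∑ i, P i ^ 3 - (∑ i, P i ^ 2) ^ 2 ≤ √s ^ 3 + s / Fintype.card ι - s ^ 2 := by
  have hcube := sum_cube_le_sqrt_sum_sq_cube univ fun i => P i - 1 / Fintype.card ι
  rw [sum_sub_inv_card_sq hP1, ← hs, sum_sub_inv_card_cube hP1] at hcube
  have hμ : ∑ i, P i ^ 2 = s + 1 / Fintype.card ι := by rw [hs]; ring
  rw [hμ] at hcube ⊢
  linear_combination hcube

lemma sq_sum_abs_sub_inv_card_le (hP1 : ∑ i, P i = 1) :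
    (∑ i, |P i - 1 / Fintype.card ι|) ^ 2
      ≤ Fintype.card ι * (∑ i, P i ^ 2 - 1 / Fintype.card ι) := by
  have hcs := sq_sum_le_card_mul_sum_sq (s := univ) (f := fun i => |P i - 1 / Fintype.card ι|)
  simpa only [sq_abs, sum_sub_inv_card_sq hP1, card_univ] using hcs

lemma sum_abs_sub_inv_card_le_two (hP0 : ∀ i, 0 ≤ P i) (hP1 : ∑ i, P i = 1) :
    ∑ i, |P i - 1 / Fintype.card ι| ≤ 2 := by
  have hcard : (Fintype.card ι : ℝ) ≠ 0 := by exact_mod_cast (card_pos_of_sum_eq_one hP1).ne'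
  calc ∑ i, |P i - 1 / Fintype.card ι| ≤ ∑ i, (P i + 1 / Fintype.card ι) :=
        sum_le_sum fun i _ => by
          simpa only [abs_of_nonneg (hP0 i), Nat.abs_cast, abs_div, abs_one]
            using abs_sub (P i) (1 / Fintype.card ι)
    _ = 2 := by
        rw [sum_add_distrib, hP1, sum_const, card_univ, nsmul_eq_mul, mul_one_div_cancel hcard]
        norm_num

lemma sq_mul_sum_cube_sub_sum_sq_sq_le (hP0 : ∀ i, 0 ≤ P i) (hP1 : ∑ i, P i = 1) {ε : ℝ}
    (hε0 : 0 ≤ ε) (hfar : ε ≤ ∑ i, |P i - 1 / Fintype.card ι|) :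
    ε ^ 2 * (∑ i, P i ^ 3 - (∑ i, P i ^ 2) ^ 2)
      ≤ 2 * √(Fintype.card ι) * (∑ i, P i ^ 2 - 1 / Fintype.card ι) ^ 2 := by
  obtain ⟨s, hs⟩ : ∃ s, s = ∑ i, P i ^ 2 - 1 / Fintype.card ι := ⟨_, rfl⟩
  have hcard : (1 : ℝ) ≤ Fintype.card ι := by exact_mod_cast card_pos_of_sum_eq_one hP1
  have hε2 : ε ≤ 2 := hfar.trans (sum_abs_sub_inv_card_le_two hP0 hP1)
  have hεs : ε ^ 2 ≤ Fintype.card ι * s := by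
    rw [hs]
    exact (pow_le_pow_left₀ hε0 hfar 2).trans (sq_sum_abs_sub_inv_card_le hP1)
  have hs0 : 0 ≤ s := hs ▸ sub_nonneg.mpr (inv_card_le_sum_sq hP1)
  have hsqrt : 1 ≤ √(Fintype.card ι : ℝ) := Real.one_le_sqrt.mpr hcard
  have hcubic : ε ^ 2 * √s ^ 3 ≤ ε * √(Fintype.card ι) * s ^ 2 := by
    have hε : ε ≤ √(Fintype.card ι) * √s := by
      rw [← Real.sqrt_mul (by positivity)]
      exact Real.le_sqrt_of_sq_le hεs
    calc ε ^ 2 * √s ^ 3 = ε * √s ^ 3 * ε := by ring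
      _ ≤ ε * √s ^ 3 * (√(Fintype.card ι) * √s) := by gcongr
      _ = ε * √(Fintype.card ι) * (√s ^ 2) ^ 2 := by ring
      _ = ε * √(Fintype.card ι) * s ^ 2 := by rw [Real.sq_sqrt hs0]
  have hlinear : ε ^ 2 * (s / Fintype.card ι) ≤ s ^ 2 := by
    calc ε ^ 2 * (s / Fintype.card ι) ≤ Fintype.card ι * s * (s / Fintype.card ι) := by gcongr
      _ = s ^ 2 := by field_simp
  -- When `ε` exceeds `1`, the term `-s ^ 2` in the bound on the moments is what closes the gap.
  have hcoeff : ε * √(Fintype.card ι) + 1 - ε ^ 2 ≤ 2 * √(Fintype.card ι) := by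
    nlinarith [mul_le_mul_of_nonneg_left hsqrt (sub_nonneg.mpr hε2), sq_nonneg (ε - 1)]
  rw [← hs]
  calc ε ^ 2 * (∑ i, P i ^ 3 - (∑ i, P i ^ 2) ^ 2)
      ≤ ε ^ 2 * (√s ^ 3 + s / Fintype.card ι - s ^ 2) := by
        exact mul_le_mul_of_nonneg_left (sum_cube_sub_sum_sq_sq_le hP1 hs) (sq_nonneg ε)
    _ ≤ (ε * √(Fintype.card ι) + 1 - ε ^ 2) * s ^ 2 := by linarith
    _ ≤ 2 * √(Fintype.card ι) * s ^ 2 := by gcongr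

lemma sum_sq_sq_le_sum_sq (hP0 : ∀ i, 0 ≤ P i) (hP1 : ∑ i, P i = 1) :
    (∑ i, P i ^ 2) ^ 2 ≤ ∑ i, P i ^ 2 := by
  have hle : ∑ i, P i ^ 2 ≤ 1 := by
    simpa only [hP1, one_pow] using sum_sq_le_sq_sum_of_nonneg (s := univ) fun i _ => hP0 i
  exact pow_le_of_le_one (by positivity) hle two_ne_zero

end Moments

section FarDistributions

variable {V : Type*} [Fintype V] [DecidableEq V] {n : ℕ} {ε τ : ℝ} {P : Fin n → ℝ}
  (G : SimpleGraph V) [DecidableRel G.Adj]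

lemma mul_sum_sq_sub_le_ex_collisions_sub_threshold (hε0 : 0 ≤ ε) (hτ0 : 0 ≤ τ)
    (hP1 : ∑ i, P i = 1) (hfar : ε ≤ ∑ i, |P i - 1 / (n : ℝ)|) :
    edgeCount G * ((1 - τ) * (∑ i, P i ^ 2 - 1 / n))
      ≤ ex P (collisions G) - edgeCount G * (1 + τ * ε ^ 2) / n := by
  have hl1 := sq_sum_abs_sub_inv_card_le hP1
  have hμ := inv_card_le_sum_sq hP1
  rw [Fintype.card_fin] at hl1 hμ
  have hexcess : ε ^ 2 / n ≤ ∑ i, P i ^ 2 - 1 / n :=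
    div_le_of_le_mul₀ n.cast_nonneg (sub_nonneg.mpr hμ)
      (((pow_le_pow_left₀ hε0 hfar 2).trans hl1).trans_eq (mul_comm _ _))
  calc (edgeCount G : ℝ) * ((1 - τ) * (∑ i, P i ^ 2 - 1 / n))
      ≤ edgeCount G * (∑ i, P i ^ 2 - 1 / n - τ * (ε ^ 2 / n)) := by
        gcongr
        linarith [mul_le_mul_of_nonneg_left hexcess hτ0]
    _ = ex P (collisions G) - edgeCount G * (1 + τ * ε ^ 2) / n := by
        rw [ex_collisions G hP1]
        ring

lemma two_mul_twoPaths_mul_le (hε0 : 0 ≤ ε)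
    (hc : (twoPaths G : ℝ) ≤ (edgeCount G : ℝ) ^ 2 * (1 - τ) ^ 2 * ε ^ 2 / (16 * √n))
    (hP0 : ∀ i, 0 ≤ P i) (hP1 : ∑ i, P i = 1) (hfar : ε ≤ ∑ i, |P i - 1 / (n : ℝ)|)
    (hγ : 0 ≤ ∑ i, P i ^ 3 - (∑ i, P i ^ 2) ^ 2) :
    2 * (twoPaths G * (∑ i, P i ^ 3 - (∑ i, P i ^ 2) ^ 2))
      ≤ 1 / 4 * (edgeCount G * ((1 - τ) * (∑ i, P i ^ 2 - 1 / n))) ^ 2 := by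
  have hmoment := sq_mul_sum_cube_sub_sum_sq_sq_le hP0 hP1 hε0 (by rwa [Fintype.card_fin])
  have hn := card_pos_of_sum_eq_one hP1
  rw [Fintype.card_fin] at hmoment hn
  set κ := ∑ i, P i ^ 3 - (∑ i, P i ^ 2) ^ 2
  calc 2 * (twoPaths G * κ)
      ≤ 2 * ((edgeCount G : ℝ) ^ 2 * (1 - τ) ^ 2 * ε ^ 2 / (16 * √n) * κ) := by gcongr
    _ = (edgeCount G : ℝ) ^ 2 * (1 - τ) ^ 2 / (8 * √n) * (ε ^ 2 * κ) := by ring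
    _ ≤ (edgeCount G : ℝ) ^ 2 * (1 - τ) ^ 2 / (8 * √n)
          * (2 * √n * (∑ i, P i ^ 2 - 1 / n) ^ 2) := by gcongr
    _ = 1 / 4 * (edgeCount G * ((1 - τ) * (∑ i, P i ^ 2 - 1 / n))) ^ 2 := by
        field_simp
        ring

theorem far_type_two_case_general (hε0 : 0 ≤ ε) (hτ0 : 0 ≤ τ) (hτ1 : τ ≤ 1)
    (hc : (twoPaths G : ℝ) ≤ (edgeCount G : ℝ) ^ 2 * (1 - τ) ^ 2 * ε ^ 2 / (16 * √n))
    (hP0 : ∀ i, 0 ≤ P i) (hP1 : ∑ i, P i = 1) (hfar : ε ≤ ∑ i, |P i - 1 / (n : ℝ)|)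
    (htype : (edgeCount G : ℝ) * (∑ i, P i ^ 2 - (∑ i, P i ^ 2) ^ 2)
        < twoPaths G * (∑ i, P i ^ 3 - (∑ i, P i ^ 2) ^ 2)) :
    pr P (fun ω : V → Fin n => collisions G ω < edgeCount G * (1 + τ * ε ^ 2) / n)
      ≤ 1 / 4 := by
  have hpaths : 0 < twoPaths G * (∑ i, P i ^ 3 - (∑ i, P i ^ 2) ^ 2) :=
    (mul_nonneg (Nat.cast_nonneg _)
      (sub_nonneg.mpr (sum_sq_sq_le_sum_sq hP0 hP1))).trans_lt htype
  have hγ := pos_of_mul_pos_right hpaths (Nat.cast_nonneg _)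
  have hbound := two_mul_twoPaths_mul_le G hε0 hc hP0 hP1 hfar hγ.le
  have hgap := mul_sum_sq_sub_le_ex_collisions_sub_threshold G hε0 hτ0 hP1 hfar
  have hμ := inv_card_le_sum_sq hP1
  rw [Fintype.card_fin] at hμ
  have hgap0 : 0 ≤ edgeCount G * ((1 - τ) * (∑ i, P i ^ 2 - 1 / (n : ℝ))) :=
    mul_nonneg (Nat.cast_nonneg _) (mul_nonneg (sub_nonneg.mpr hτ1) (sub_nonneg.mpr hμ))
  have hgapsq := pow_le_pow_left₀ hgap0 hgap 2
  have hchebyshev := pr_lt_mul_sq_le_var hP0 (sub_nonneg.mp (hgap0.trans hgap))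
  rw [var_collisions G hP1] at hchebyshev
  refine le_of_mul_le_mul_right ?_ (show 0 < (ex P (collisions G)
    - edgeCount G * (1 + τ * ε ^ 2) / n) ^ 2 by linarith)
  linarith

end FarDistributions

/-- Type-2 far distributions: if `c(G) ≤ |E|²·(1−τ)²ε²/(16√n)`, `P` is ε-far from uniform
and `|E|·(μ − μ²) < c(G)·(γ − μ²)`, then `Pr[Z < T] ≤ 1/4` for `T = |E|·(1+τε²)/n`. -/
theorem far_type_two_case {V : Type*} [Fintype V] [DecidableEq V] (n : ℕ) (hn : 1 ≤ n)
    (ε τ : ℝ) (hε0 : 0 < ε) (hε1 : ε ≤ 1) (hτ0 : 0 ≤ τ) (hτ1 : τ < 1)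
    (G : SimpleGraph V) [DecidableRel G.Adj]
    (hc : (twoPaths G : ℝ)
        ≤ (edgeCount G : ℝ) ^ 2 * (1 - τ) ^ 2 * ε ^ 2 / (16 * Real.sqrt n))
    (P : Fin n → ℝ) (hP0 : ∀ i, 0 ≤ P i) (hP1 : (∑ i, P i) = 1)
    (hfar : ε ≤ ∑ i, |P i - 1 / (n : ℝ)|)
    (htype : (edgeCount G : ℝ) * ((∑ i, (P i) ^ 2) - (∑ i, (P i) ^ 2) ^ 2)
        < (twoPaths G : ℝ) * ((∑ i, (P i) ^ 3) - (∑ i, (P i) ^ 2) ^ 2))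
    (T : ℝ) (hT : T = (edgeCount G : ℝ) * (1 + τ * ε ^ 2) / n) :
    pr P (fun ω : V → Fin n => collisions G ω < T) ≤ 1 / 4 := by
  subst hT
  exact far_type_two_case_general G hε0.le hτ0 hτ1.le hc hP0 hP1 hfar htype
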